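/- arXiv:2406.18106 — 2 statements merged into one kernel-verified Lean document; each statement's English description precedes it below -/
import Mathlib

section
/- The image of the Whitney umbrella map f(x,y) = (x², x·y, y) is not locally an analytic set at the origin: there exist no r > 0 and real analytic function g on the open ball B(0,r) ⊆ ℝ³ such that (image of f) ∩ B(0,r) = {p ∈ B(0,r) : g(p) = 0}. -/
/-!
The image of the Whitney umbrella contains the positive half of the `u`-axis and misses the negative
half. If the image were the zero set of an analytic `g` near the origin, then `t ↦ g (t, 0, 0)` would
be an analytic function of one variable vanishing for all small `t ≥ 0`, hence, its zeros
accumulating at `0`, also for all small `t < 0`. That would put points of the negative half-axis in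
the image.
-/

/-- Points of `ℝ³` (as the Euclidean space `EuclideanSpace ℝ (Fin 3)`). -/
noncomputable def pt3 (u v w : ℝ) : EuclideanSpace ℝ (Fin 3) :=
  (WithLp.equiv 2 (Fin 3 → ℝ)).symm ![u, v, w]

/-- The Whitney umbrella map `f(x,y) = (x², x·y, y)` with target `ℝ³`. -/
noncomputable def whitneyUmbrella : ℝ × ℝ → EuclideanSpace ℝ (Fin 3) :=
  fun p => pt3 (p.1 ^ 2) (p.1 * p.2) p.2

/-- The image of the Whitney umbrella meets the `u`-axis exactly in its nonnegative half. -/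
lemma pt3_axis_mem_range_iff (t : ℝ) : pt3 t 0 0 ∈ Set.range whitneyUmbrella ↔ 0 ≤ t := by
  constructor
  · rintro ⟨p, hp⟩
    have h0 : p.1 ^ 2 = t := by simpa [whitneyUmbrella, pt3] using congrArg (fun q => q 0) hp
    exact h0 ▸ sq_nonneg p.1
  · intro ht
    exact ⟨(√t, 0), by simp [whitneyUmbrella, Real.sq_sqrt ht]⟩

lemma pt3_axis_eq_smul (t : ℝ) : pt3 t 0 0 = t • pt3 1 0 0 := by
  ext i
  fin_cases i <;> simp [pt3]

lemma norm_pt3_axis (t : ℝ) : ‖pt3 t 0 0‖ = |t| := by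
  simp [pt3, EuclideanSpace.norm_eq, Fin.sum_univ_three, Real.sqrt_sq_eq_abs]

/-- The image of the Whitney umbrella is not locally an analytic set at the origin:
there are no `r > 0` and real analytic `g` on `B(0,r)` whose zero set in `B(0,r)` is
exactly `(image of f) ∩ B(0,r)`. -/
theorem whitneyUmbrella_image_not_locally_analytic :
    ¬ ∃ r : ℝ, 0 < r ∧ ∃ g : EuclideanSpace ℝ (Fin 3) → ℝ,
      AnalyticOnNhd ℝ g (Metric.ball 0 r) ∧
      Set.range whitneyUmbrella ∩ Metric.ball 0 r
        = {p ∈ Metric.ball (0 : EuclideanSpace ℝ (Fin 3)) r | g p = 0} := by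
  rintro ⟨r, hr, g, hg, hset⟩
  have hball (t : ℝ) : pt3 t 0 0 ∈ Metric.ball (0 : EuclideanSpace ℝ (Fin 3)) r ↔ |t| < r := by
    rw [mem_ball_zero_iff, norm_pt3_axis]
  have hzero (t : ℝ) (ht : |t| < r) : g (pt3 t 0 0) = 0 ↔ 0 ≤ t := by
    have hmem := Set.ext_iff.mp hset (pt3 t 0 0)
    simp only [Set.mem_inter_iff, Set.mem_ofPred_eq, hball, ht, and_true, true_and,
      pt3_axis_mem_range_iff] at hmem
    exact hmem.symm
  have han : AnalyticAt ℝ (fun t : ℝ => g (pt3 t 0 0)) 0 := by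
    have hline : AnalyticAt ℝ (fun t : ℝ => pt3 t 0 0) 0 := by
      rw [funext pt3_axis_eq_smul]
      fun_prop
    exact AnalyticAt.fun_comp (g := g) (f := fun t : ℝ => pt3 t 0 0)
      (hg _ ((hball 0).mpr (by simpa using hr))) hline
  have hsmall : ∀ᶠ t : ℝ in nhds 0, |t| < r :=
    continuous_abs.continuousAt.eventually_lt continuousAt_const (by simpa using hr)
  have hfreq : ∃ᶠ t : ℝ in nhdsWithin 0 {0}ᶜ, g (pt3 t 0 0) = 0 := by
    have hpos : ∀ᶠ t : ℝ in nhdsWithin 0 (Set.Ioi 0), g (pt3 t 0 0) = 0 := by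
      filter_upwards [hsmall.filter_mono nhdsWithin_le_nhds, self_mem_nhdsWithin] with t ht ht0
      exact (hzero t ht).mpr (le_of_lt ht0)
    exact hpos.frequently.filter_mono (nhdsWithin_mono 0 fun t ht => ne_of_gt ht)
  have hev := han.frequently_zero_iff_eventually_zero.mp hfreq
  have hneg : ∀ᶠ t : ℝ in nhdsWithin 0 (Set.Iio 0), False := by
    filter_upwards [(hev.and hsmall).filter_mono nhdsWithin_le_nhds, self_mem_nhdsWithin]
      with t ht ht0
    exact absurd ((hzero t ht.2).mp ht.1) (not_le_of_gt ht0)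
  exact hneg.exists.elim fun _ h => h
end

section
/- The critical value set D of the swallowtail map is not locally an analytic set at the origin: there exist no r > 0 and real analytic function g on the open ball B(0,r) ⊆ ℝ³ such that D ∩ B(0,r) = {p ∈ B(0,r) : g(p) = 0}, where D = F({(x,y,z) : 4x³ + 2y·x + z = 0}) for the swallowtail map F(x,y,z) = (x⁴ + y·x² + z·x, y, z). -/
/-- The critical value set `D` of the swallowtail map
`F(x,y,z) = (x⁴ + y·x² + z·x, y, z)`, i.e. the image under `F` of the critical set
`{(x,y,z) : 4x³ + 2y·x + z = 0}`, viewed in `ℝ³`. -/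
noncomputable def swallowtailDiscriminant : Set (EuclideanSpace ℝ (Fin 3)) :=
  {q | ∃ x y z : ℝ, 4 * x ^ 3 + 2 * y * x + z = 0 ∧
        q = pt3 (x ^ 4 + y * x ^ 2 + z * x) y z}

theorem analyticAt_doubleCurve (y : ℝ) :
    AnalyticAt ℝ (fun y : ℝ => pt3 (-y ^ 2 / 4) y 0) y := by
  unfold pt3
  have h : AnalyticAt ℝ (fun y : ℝ => (![-y ^ 2 / 4, y, 0] : Fin 3 → ℝ)) y := by
    rw [analyticAt_pi_iff]
    intro i
    fin_cases i
    · simpa using (by fun_prop : AnalyticAt ℝ (fun y : ℝ => -y ^ 2 / 4) y)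
    · simpa using (by fun_prop : AnalyticAt ℝ (fun y : ℝ => y) y)
    · simpa using analyticAt_const
  exact ((EuclideanSpace.equiv (Fin 3) ℝ).symm.toContinuousLinearMap.analyticAt _).comp h

/-- Exactly the half `y ≤ 0` of the double curve lies on the swallowtail. -/
theorem doubleCurve_mem_iff (y : ℝ) :
    pt3 (-y ^ 2 / 4) y 0 ∈ swallowtailDiscriminant ↔ y ≤ 0 := by
  constructor
  · rintro ⟨x, y', z, hc, hq⟩
    have h0 := congrArg (fun q => q 0) hq
    have h1 := congrArg (fun q => q 1) hq
    have h2 := congrArg (fun q => q 2) hq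
    simp [pt3] at h0 h1 h2
    subst h1 h2
    by_contra! hy
    have hx : x * (2 * x ^ 2 + y) = 0 := by linarith
    have hx0 : x = 0 := (mul_eq_zero.mp hx).resolve_right (by positivity)
    subst hx0
    nlinarith
  · intro hy
    have hs : √(-y / 2) ^ 2 = -y / 2 := Real.sq_sqrt (by linarith)
    refine ⟨√(-y / 2), y, 0, by linear_combination 4 * √(-y / 2) * hs, ?_⟩
    congr 1
    linear_combination (-√(-y / 2) ^ 2 - y / 2) * hs

open Filter Topology in
/-- The swallowtail critical value set is not locally an analytic set at the origin:
there are no `r > 0` and real analytic `g` on `B(0,r)` whose zero set in `B(0,r)` is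
exactly `D ∩ B(0,r)`. -/
theorem swallowtail_discriminant_not_locally_analytic :
    ¬ ∃ r : ℝ, 0 < r ∧ ∃ g : EuclideanSpace ℝ (Fin 3) → ℝ,
      AnalyticOnNhd ℝ g (Metric.ball 0 r) ∧
      swallowtailDiscriminant ∩ Metric.ball 0 r
        = {p ∈ Metric.ball (0 : EuclideanSpace ℝ (Fin 3)) r | g p = 0} := by
  rintro ⟨r, hr, g, hg, hD⟩
  set γ : ℝ → EuclideanSpace ℝ (Fin 3) := fun y => pt3 (-y ^ 2 / 4) y 0 with hγ
  have hγ0 : γ 0 = 0 := by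
    ext i
    fin_cases i <;> simp [hγ, pt3]
  have hγan : AnalyticAt ℝ γ 0 := analyticAt_doubleCurve 0
  have hball : ∀ᶠ y in 𝓝 (0 : ℝ), γ y ∈ Metric.ball 0 r :=
    hγan.continuousAt.eventually_mem (by rw [hγ0]; exact Metric.ball_mem_nhds 0 hr)
  have hiff : ∀ᶠ y in 𝓝 (0 : ℝ), (g (γ y) = 0 ↔ y ≤ 0) := by
    filter_upwards [hball] with y hy
    have h := Set.ext_iff.mp hD (γ y)
    simp only [Set.mem_inter_iff, Set.mem_ofPred_eq, hy, and_true, true_and] at h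
    exact h.symm.trans (doubleCurve_mem_iff y)
  have han : AnalyticAt ℝ (fun y => g (γ y)) 0 :=
    (show AnalyticAt ℝ g (γ 0) by
      rw [hγ0]; exact hg 0 (Metric.mem_ball_self hr)).comp hγan
  -- The zeros at small negative `y` accumulate at `0`, excluding an isolated zero.
  have hfreq : ∃ᶠ y in 𝓝[≠] (0 : ℝ), g (γ y) = 0 := by
    have h : ∀ᶠ y in 𝓝[<] (0 : ℝ), g (γ y) = 0 := by
      filter_upwards [hiff.filter_mono nhdsWithin_le_nhds, self_mem_nhdsWithin] with y hy hneg
      exact hy.mpr (le_of_lt hneg)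
    exact h.frequently.filter_mono (nhdsWithin_mono 0 fun y hy => ne_of_lt hy)
  have hzero := han.frequently_zero_iff_eventually_zero.mp hfreq
  obtain ⟨y, ⟨hy, hy0⟩, hpos⟩ :=
    (((hiff.and hzero).filter_mono nhdsWithin_le_nhds).and
      (self_mem_nhdsWithin : Set.Ioi (0 : ℝ) ∈ 𝓝[>] (0 : ℝ))).exists
  exact absurd (hy.mp hy0) (not_le.mpr hpos)
end
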